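/- In the exterior algebra on e₁,…,e₉ over ℚ, the ideal generated by the 27 quadratic elements e₁e₅, e₁e₆, e₂e₇, e₂e₈, e₃e₅, e₃e₆, e₃e₇, e₃e₉, e₄e₅, e₄e₆, e₄e₈, e₄e₉, e₅e₇, e₅e₈, e₅e₉, e₆e₇, e₆e₈, e₆e₉, e₇e₈, e₇e₉, e₈e₉, e₁e₇+e₂e₃, e₁e₈−e₂e₄, e₁e₉+e₃e₄, e₁e₉+e₅e₆, e₂e₉−e₃e₈, e₃e₈−e₄e₇ gives a quotient with Hilbert series 1 + 9z + 9z² + z³. -/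

import Mathlib

open ExteriorAlgebra

namespace Stmt19

/-- The exterior algebra over `ℚ` on nine degree-1 generators. -/
abbrev E : Type := ExteriorAlgebra ℚ (Fin 9 → ℚ)

/-- The generators `e₁, …, e₉`. -/
noncomputable def e (i : Fin 9) : E := ι ℚ (Pi.single i 1)

/-- The 27 quadratic relations of case 77 of the Vinberg–Elashvili classification. -/
def rel : E → E → Prop := fun a b =>
  b = 0 ∧ a ∈ ({e 0 * e 4, e 0 * e 5, e 1 * e 6, e 1 * e 7, e 2 * e 4, e 2 * e 5,
                 e 2 * e 6, e 2 * e 8, e 3 * e 4, e 3 * e 5, e 3 * e 7, e 3 * e 8,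
                 e 4 * e 6, e 4 * e 7, e 4 * e 8, e 5 * e 6, e 5 * e 7, e 5 * e 8,
                 e 6 * e 7, e 6 * e 8, e 7 * e 8,
                 e 0 * e 6 + e 1 * e 2, e 0 * e 7 - e 1 * e 3,
                 e 0 * e 8 + e 2 * e 3, e 0 * e 8 + e 4 * e 5,
                 e 1 * e 8 - e 2 * e 7, e 2 * e 7 - e 3 * e 6} : Set E)

/-- The quotient of the exterior algebra by the 27 quadratic elements. -/
abbrev A : Type := RingQuot rel

/-- The degree-`n` component of the quotient. -/
noncomputable def piece (n : ℕ) : Submodule ℚ A :=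
  Submodule.map (RingQuot.mkAlgHom ℚ rel).toLinearMap
    ((LinearMap.range (ι ℚ : (Fin 9 → ℚ) →ₗ[ℚ] E)) ^ n)

end Stmt19

/-
A trivector `ω` on `V` determines a graded module `R ⊕ V ⊕ V* ⊕ R` over the exterior algebra of `V`,
in which a product `u ∧ v` sends `1` to the contraction `ω(u, v, ·)` and `u ∧ v ∧ w` sends `1` to
`ω(u, v, w)`. The relations of case 77 generate the kernel of `u ∧ v ↦ ω(u, v, ·)` for
`ω = ε₁₂₉ + ε₁₃₈ + ε₁₄₇ + ε₂₃₄ + ε₂₅₆`, where the `εᵢ` are dual to the `eᵢ`, so the quotient acts on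
this module. Since `ω` is nondegenerate, this bounds the dimensions of its components below by
`1, 9, 9, 1`. Conversely, in degree two a product of vectors depends only on its contraction with
`ω`, and in degree three the relations reduce every monomial to the multiple of a single element
prescribed by `ω`. That element is annihilated by every vector `u`: it is proportional to some
`u ∧ v ∧ w`, and `u ∧ u = 0`.
-/

namespace Trivector

section Alternating

variable {R M N ι : Type*} [CommRing R] [AddCommGroup M] [Module R M] [AddCommGroup N] [Module R N]
  [LinearOrder ι]

theorem bilin_ext_of_isAlt {B B' : M →ₗ[R] M →ₗ[R] N} (hB : B.IsAlt) (hB' : B'.IsAlt)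
    (b : Module.Basis ι R M) (h : ∀ i j, i < j → B (b i) (b j) = B' (b i) (b j)) : B = B' := by
  refine b.ext fun i => b.ext fun j => ?_
  rcases lt_trichotomy i j with hij | rfl | hij
  · exact h i j hij
  · rw [hB, hB']
  · rw [← hB.neg, ← hB'.neg, h j i hij]

theorem alternatingMap_ext_of_strictMono {n : ℕ} {f g : M [⋀^Fin n]→ₗ[R] N}
    (b : Module.Basis ι R M)
    (h : ∀ v : Fin n → ι, StrictMono v → f (fun k => b (v k)) = g (fun k => b (v k))) :
    f = g := by
  refine b.ext_alternating fun v hv => ?_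
  have hsorted := h (v ∘ Tuple.sort v)
    ((Tuple.monotone_sort v).strictMono_of_injective (hv.comp (Tuple.sort v).injective))
  have hf := f.map_perm (fun k => b (v k)) (Tuple.sort v)
  have hg := g.map_perm (fun k => b (v k)) (Tuple.sort v)
  exact MulAction.injective (Equiv.Perm.sign (Tuple.sort v)) (hf.symm.trans (hsorted.trans hg))

end Alternating

section TrivectorModule

variable {R V : Type*} [CommRing R] [AddCommGroup V] [Module R V] (ω : V [⋀^Fin 3]→ₗ[R] R)

/-- The contraction `(u, v) ↦ ω(u, v, ·)` of a trivector with two vectors. -/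
def contract : V →ₗ[R] V →ₗ[R] Module.Dual R V :=
  (AlternatingMap.curryLeftLinearMap ∘ₗ ω.curryLeft).compr₂
    (LinearMap.compRight R AlternatingMap.constLinearEquivOfIsEmpty.symm.toLinearMap ∘ₗ
      AlternatingMap.curryLeftLinearMap)

theorem contract_apply (u v w : V) : contract ω u v w = ω ![u, v, w] := by
  simp [contract, Matrix.zero_empty]

theorem contract_isAlt : (contract ω).IsAlt := fun u => LinearMap.ext fun w => by
  rw [contract_apply, LinearMap.zero_apply]
  exact ω.map_eq_zero_of_eq _ (i := 0) (j := 1) rfl (by decide)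

theorem contract_apply_isAlt (u : V) : (contract ω u).IsAlt := fun v => by
  rw [contract_apply]
  exact ω.map_eq_zero_of_eq _ (i := 1) (j := 2) rfl (by decide)

theorem contract_rotate (u v w : V) : contract ω u v w = contract ω v w u := by
  rw [← (contract_isAlt ω).neg v u, LinearMap.neg_apply, (contract_apply_isAlt ω v).neg]

/-- The graded module `R ⊕ V ⊕ V* ⊕ R`, with summands in degrees `0, 1, 2, 3`, on which the
exterior algebra of `V` acts through a trivector. -/
abbrev TrivectorModule (R V : Type*) [CommRing R] [AddCommGroup V] [Module R V] : Type _ :=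
  R × V × Module.Dual R V × R

/-- The action of a vector on `TrivectorModule R V`. -/
def vectorAct : V →ₗ[R] Module.End R (TrivectorModule R V) :=
  LinearMap.mk₂ R (fun u m => (0, m.1 • u, contract ω u m.2.1, m.2.2.1 u))
    (fun u u' m => by simp) (fun a u m => by simp [smul_comm a])
    (fun u m m' => by simp [add_smul]) (fun a u m => by simp [mul_smul])

/-- The degree two action of a linear form on `TrivectorModule R V`: the product of two vectors
acts through their contraction with the trivector. -/
def dualAct : Module.Dual R V →ₗ[R] Module.End R (TrivectorModule R V) :=
  LinearMap.mk₂ R (fun ξ m => (0, 0, m.1 • ξ, ξ m.2.1))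
    (fun ξ ξ' m => by simp) (fun a ξ m => by simp [smul_comm a])
    (fun ξ m m' => by simp [add_smul]) (fun a ξ m => by simp [mul_smul])

theorem vectorAct_mul_vectorAct (u v : V) :
    vectorAct ω u * vectorAct ω v = dualAct (contract ω u v) :=
  LinearMap.ext fun m => by simp [vectorAct, dualAct, contract_rotate ω u v]

/-- The action of the exterior algebra on `TrivectorModule R V` extending `vectorAct`. -/
def exteriorAct : ExteriorAlgebra R V →ₐ[R] Module.End R (TrivectorModule R V) :=
  ExteriorAlgebra.lift R ⟨vectorAct ω, fun u => by
    rw [vectorAct_mul_vectorAct, contract_isAlt ω u, map_zero]⟩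

theorem exteriorAct_ι (u : V) : exteriorAct ω (ι R u) = vectorAct ω u := by
  simp [exteriorAct]

theorem exteriorAct_ι_mul_ι (u v : V) :
    exteriorAct ω (ι R u * ι R v) = dualAct (contract ω u v) := by
  rw [map_mul, exteriorAct_ι, exteriorAct_ι, vectorAct_mul_vectorAct]

end TrivectorModule

section Quotient

variable {K V A : Type*} [Field K] [AddCommGroup V] [Module K V] [Ring A] [Algebra K A]
  {ω : V [⋀^Fin 3]→ₗ[K] K} {π : ExteriorAlgebra K V →ₐ[K] A}
  {ρ : A →ₐ[K] Module.End K (TrivectorModule K V)}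
  {D : Module.Dual K V →ₗ[K] A} {vol : A}

theorem span_contract_eq_top [FiniteDimensional K V] (hω : (contract ω).SeparatingLeft) :
    Submodule.span K (Set.range fun p : V × V => contract ω p.1 p.2) = ⊤ := by
  set W := Submodule.span K (Set.range fun p : V × V => contract ω p.1 p.2)
  have hbot : W.dualCoannihilator = ⊥ := by
    refine eq_bot_iff.mpr fun u hu => hω u fun v => LinearMap.ext fun w => ?_
    rw [Submodule.mem_dualCoannihilator] at hu
    rw [contract_rotate]
    exact hu _ (Submodule.subset_span ⟨(v, w), rfl⟩)
  rw [← Subspace.dualCoannihilator_dualAnnihilator_eq (W := W), hbot,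
    Submodule.dualAnnihilator_bot]

theorem exists_apply_ne_zero (hω : (contract ω).SeparatingLeft) {u : V} (hu : u ≠ 0) :
    ∃ v w, ω ![u, v, w] ≠ 0 := by
  contrapose! hu
  exact hω u fun v => LinearMap.ext fun w => by rw [contract_apply, hu, LinearMap.zero_apply]

theorem map_exteriorPower_zero : (⋀[K]^0 V).map π.toLinearMap = Submodule.span K {1} := by
  rw [exteriorPower, pow_zero, Submodule.one_eq_span, Submodule.map_span, Set.image_singleton,
    AlgHom.toLinearMap_apply, map_one]

theorem map_exteriorPower_one :
    (⋀[K]^1 V).map π.toLinearMap = LinearMap.range (π.toLinearMap ∘ₗ ι K) := by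
  rw [exteriorPower, pow_one, LinearMap.range_comp]

theorem map_exteriorPower_succ (n : ℕ) :
    (⋀[K]^(n + 1) V).map π.toLinearMap =
      LinearMap.range (π.toLinearMap ∘ₗ ι K) * (⋀[K]^n V).map π.toLinearMap := by
  rw [exteriorPower, pow_succ', Submodule.map_mul, LinearMap.range_comp]

theorem map_exteriorPower_two [FiniteDimensional K V] (hω : (contract ω).SeparatingLeft)
    (hD : ∀ u v, π (ι K u * ι K v) = D (contract ω u v)) :
    (⋀[K]^2 V).map π.toLinearMap = LinearMap.range D := by
  rw [map_exteriorPower_succ, map_exteriorPower_one]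
  apply le_antisymm
  · rw [Submodule.mul_le]
    rintro _ ⟨u, rfl⟩ _ ⟨v, rfl⟩
    exact ⟨contract ω u v, by rw [← hD, map_mul]; rfl⟩
  · rw [LinearMap.range_eq_map, ← span_contract_eq_top hω, Submodule.map_span,
      Submodule.span_le]
    rintro _ ⟨_, ⟨⟨u, v⟩, rfl⟩, rfl⟩
    rw [← hD, map_mul]
    exact Submodule.mul_mem_mul ⟨u, rfl⟩ ⟨v, rfl⟩

theorem map_exteriorPower_three [Nontrivial V] (hω : (contract ω).SeparatingLeft)
    (hvol : ∀ v, π (ιMulti K 3 v) = ω v • vol) :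
    (⋀[K]^3 V).map π.toLinearMap = Submodule.span K {vol} := by
  rw [← ιMulti_span_fixedDegree, Submodule.map_span, ← Set.range_comp]
  apply le_antisymm
  · rw [Submodule.span_le]
    rintro _ ⟨v, rfl⟩
    exact Submodule.mem_span_singleton.mpr ⟨ω v, (hvol v).symm⟩
  · obtain ⟨u, hu⟩ := exists_ne (0 : V)
    obtain ⟨v, w, huvw⟩ := exists_apply_ne_zero hω hu
    rw [Submodule.span_singleton_le_iff_mem, ← inv_smul_smul₀ huvw vol, ← hvol]
    exact Submodule.smul_mem _ _ (Submodule.subset_span ⟨_, rfl⟩)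

theorem ι_mul_vol (hω : (contract ω).SeparatingLeft)
    (hvol : ∀ v, π (ιMulti K 3 v) = ω v • vol) (u : V) : π (ι K u) * vol = 0 := by
  obtain rfl | hu := eq_or_ne u 0
  · simp only [map_zero, zero_mul]
  obtain ⟨v, w, huvw⟩ := exists_apply_ne_zero hω hu
  have husq : π (ι K u) * π (ιMulti K 3 ![u, v, w]) = 0 := by
    rw [← map_mul, ιMulti_succ_apply, ← mul_assoc, Matrix.cons_val_zero, ι_sq_zero, zero_mul,
      map_zero]
  rw [hvol, mul_smul_comm] at husq
  exact (smul_eq_zero.mp husq).resolve_left huvw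

theorem map_exteriorPower_eq_bot [Nontrivial V] (hω : (contract ω).SeparatingLeft)
    (hvol : ∀ v, π (ιMulti K 3 v) = ω v • vol) {n : ℕ} (hn : 4 ≤ n) :
    (⋀[K]^n V).map π.toLinearMap = ⊥ := by
  induction n, hn using Nat.le_induction with
  | base =>
    rw [map_exteriorPower_succ, map_exteriorPower_three hω hvol, eq_bot_iff, Submodule.mul_le]
    rintro _ ⟨u, rfl⟩ _ hy
    obtain ⟨a, rfl⟩ := Submodule.mem_span_singleton.mp hy
    rw [mul_smul_comm]
    exact (Submodule.mem_bot K).mpr (by rw [LinearMap.comp_apply, AlgHom.toLinearMap_apply,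
      ι_mul_vol hω hvol, smul_zero])
  | succ n _ ih => rw [map_exteriorPower_succ, ih, Submodule.mul_bot]

theorem injective_comp_ι (hρ : ρ.comp π = exteriorAct ω) :
    Function.Injective (π.toLinearMap ∘ₗ ι K) := by
  refine (injective_iff_map_eq_zero _).mpr fun u (hu : π (ι K u) = 0) => ?_
  have hact : vectorAct ω u = 0 := by
    rw [← exteriorAct_ι, ← hρ, AlgHom.comp_apply, hu, map_zero]
  simpa [vectorAct] using congr($hact (1, 0, 0, 0))

theorem comp_dual_eq_dualAct [FiniteDimensional K V] (hω : (contract ω).SeparatingLeft)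
    (hρ : ρ.comp π = exteriorAct ω) (hD : ∀ u v, π (ι K u * ι K v) = D (contract ω u v)) :
    ρ.toLinearMap ∘ₗ D = dualAct := by
  refine LinearMap.ext_on (span_contract_eq_top hω) ?_
  rintro _ ⟨⟨u, v⟩, rfl⟩
  rw [LinearMap.comp_apply, ← hD, ← exteriorAct_ι_mul_ι, ← hρ]
  rfl

theorem injective_dual [FiniteDimensional K V] (hω : (contract ω).SeparatingLeft)
    (hρ : ρ.comp π = exteriorAct ω) (hD : ∀ u v, π (ι K u * ι K v) = D (contract ω u v)) :
    Function.Injective D := by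
  refine (injective_iff_map_eq_zero _).mpr fun ξ hξ => ?_
  have hact : dualAct ξ = 0 := by
    rw [← comp_dual_eq_dualAct hω hρ hD, LinearMap.comp_apply, hξ, map_zero]
  simpa [dualAct] using congr($hact (1, 0, 0, 0))

theorem vol_ne_zero [Nontrivial V] (hω : (contract ω).SeparatingLeft)
    (hρ : ρ.comp π = exteriorAct ω) (hvol : ∀ v, π (ιMulti K 3 v) = ω v • vol) : vol ≠ 0 := by
  rintro rfl
  obtain ⟨u, hu⟩ := exists_ne (0 : V)
  obtain ⟨v, w, huvw⟩ := exists_apply_ne_zero hω hu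
  have hact : vectorAct ω u * dualAct (contract ω v w) = 0 := by
    rw [← exteriorAct_ι, ← exteriorAct_ι_mul_ι, ← map_mul, ← hρ, AlgHom.comp_apply,
      show ι K u * (ι K v * ι K w) = ιMulti K 3 ![u, v, w] by simp [ιMulti_apply], hvol,
      smul_zero, map_zero]
  refine huvw ?_
  rw [← contract_apply, contract_rotate]
  simpa [vectorAct, dualAct] using congr($hact (1, 0, 0, 0))

theorem finrank_map_exteriorPower_zero [Nontrivial A] :
    Module.finrank K ((⋀[K]^0 V).map π.toLinearMap) = 1 := by
  rw [map_exteriorPower_zero, finrank_span_singleton one_ne_zero]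

theorem finrank_map_exteriorPower_one (hρ : ρ.comp π = exteriorAct ω) :
    Module.finrank K ((⋀[K]^1 V).map π.toLinearMap) = Module.finrank K V := by
  rw [map_exteriorPower_one, LinearMap.finrank_range_of_inj (injective_comp_ι hρ)]

theorem finrank_map_exteriorPower_two [FiniteDimensional K V] (hω : (contract ω).SeparatingLeft)
    (hρ : ρ.comp π = exteriorAct ω) (hD : ∀ u v, π (ι K u * ι K v) = D (contract ω u v)) :
    Module.finrank K ((⋀[K]^2 V).map π.toLinearMap) = Module.finrank K V := by
  rw [map_exteriorPower_two hω hD, LinearMap.finrank_range_of_inj (injective_dual hω hρ hD),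
    Subspace.dual_finrank_eq]

theorem finrank_map_exteriorPower_three [Nontrivial V] (hω : (contract ω).SeparatingLeft)
    (hρ : ρ.comp π = exteriorAct ω) (hvol : ∀ v, π (ιMulti K 3 v) = ω v • vol) :
    Module.finrank K ((⋀[K]^3 V).map π.toLinearMap) = 1 := by
  rw [map_exteriorPower_three hω hvol, finrank_span_singleton (vol_ne_zero hω hρ hvol)]

theorem finrank_map_exteriorPower_eq_zero [Nontrivial V] (hω : (contract ω).SeparatingLeft)
    (hvol : ∀ v, π (ιMulti K 3 v) = ω v • vol) {n : ℕ} (hn : 4 ≤ n) :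
    Module.finrank K ((⋀[K]^n V).map π.toLinearMap) = 0 := by
  rw [map_exteriorPower_eq_bot hω hvol hn, finrank_bot]

end Quotient

section Coordinates

variable {R ι : Type*} [CommRing R]

/-- The determinant of the coordinates indexed by `t`, as an alternating form on `ι → R`. -/
def coordDet {n : ℕ} (t : Fin n → ι) : (ι → R) [⋀^Fin n]→ₗ[R] R :=
  Matrix.detRowAlternating.compLinearMap (LinearMap.funLeft R R t)

theorem coordDet_apply {n : ℕ} (t : Fin n → ι) (v : Fin n → ι → R) :
    coordDet t v = (Matrix.of fun i j => v i (t j)).det :=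
  rfl

/-- The Plücker coordinates of the bivector `u ∧ v`. -/
def plucker (u v : ι → R) (i j : ι) : R := u i * v j - u j * v i

end Coordinates

end Trivector

namespace Stmt19

open Trivector

/-- The trivector of case 77: the sum of the coordinate forms `ε₁₂₉`, `ε₁₃₈`, `ε₁₄₇`, `ε₂₃₄` and
`ε₂₅₆`, with indices shifted down by one. -/
def trivector : (Fin 9 → ℚ) [⋀^Fin 3]→ₗ[ℚ] ℚ :=
  coordDet ![0, 1, 8] + coordDet ![0, 2, 7] + coordDet ![0, 3, 6] + coordDet ![1, 2, 3] +
    coordDet ![1, 4, 5]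

open LinearMap in
theorem contract_trivector (u v : Fin 9 → ℚ) :
    contract trivector u v =
      (plucker u v 1 8 + plucker u v 2 7 + plucker u v 3 6) • proj 0 +
      (-plucker u v 0 8 + plucker u v 2 3 + plucker u v 4 5) • proj 1 +
      (-plucker u v 0 7 - plucker u v 1 3) • proj 2 +
      (-plucker u v 0 6 + plucker u v 1 2) • proj 3 +
      -plucker u v 1 5 • proj 4 + plucker u v 1 4 • proj 5 + plucker u v 0 3 • proj 6 +
      plucker u v 0 2 • proj 7 + plucker u v 0 1 • proj 8 := by
  refine LinearMap.ext fun w => ?_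
  rw [contract_apply]
  simp only [trivector, plucker, AlternatingMap.add_apply, coordDet_apply,
    Matrix.det_fin_three, Matrix.of_apply, Matrix.cons_val, LinearMap.add_apply,
    LinearMap.smul_apply, coe_proj, Function.eval, smul_eq_mul]
  ring

theorem contract_trivector_separatingLeft : (contract trivector).SeparatingLeft := by
  intro u hu
  have h (i j : Fin 9) : contract trivector (Pi.single i 1) (Pi.single j 1) u = 0 := by
    rw [← contract_rotate, hu, LinearMap.zero_apply]
  ext k
  fin_cases k
  · simpa [contract_trivector, plucker] using h 1 8
  · simpa [contract_trivector, plucker] using h 8 0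
  · simpa [contract_trivector, plucker] using h 3 1
  · simpa [contract_trivector, plucker] using h 1 2
  · simpa [contract_trivector, plucker] using h 5 1
  · simpa [contract_trivector, plucker] using h 1 4
  · simpa [contract_trivector, plucker] using h 0 3
  · simpa [contract_trivector, plucker] using h 0 2
  · simpa [contract_trivector, plucker] using h 0 1

theorem exteriorAct_e_mul_e (i j : Fin 9) :
    exteriorAct trivector (e i * e j) =
      dualAct (contract trivector (Pi.single i 1) (Pi.single j 1)) :=
  exteriorAct_ι_mul_ι _ _ _

theorem exteriorAct_eq_zero_of_rel : ∀ a, rel a 0 → exteriorAct trivector a = 0 := by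
  simp only [rel, true_and, Set.mem_insert_iff, Set.mem_singleton_iff, forall_eq_or_imp, forall_eq,
    map_add, map_sub, exteriorAct_e_mul_e]
  simp [contract_trivector, plucker]

/-- The action of the quotient algebra `A` on `TrivectorModule` through `trivector`. -/
noncomputable def quotientAct : A →ₐ[ℚ] Module.End ℚ (TrivectorModule ℚ (Fin 9 → ℚ)) :=
  RingQuot.liftAlgHom ℚ ⟨exteriorAct trivector, fun a b h => by
    obtain rfl := h.1
    rw [exteriorAct_eq_zero_of_rel a h, map_zero]⟩

theorem quotientAct_comp_mkAlgHom :
    quotientAct.comp (RingQuot.mkAlgHom ℚ rel) = exteriorAct trivector :=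
  AlgHom.ext fun a => by rw [AlgHom.comp_apply, quotientAct, RingQuot.liftAlgHom_mkAlgHom_apply]

/-- The image of the generator `e i` in the quotient `A`. -/
noncomputable def gen (i : Fin 9) : A := RingQuot.mkAlgHom ℚ rel (e i)

theorem mkAlgHom_eq_zero_of_rel {a : E} (h : rel a 0) : RingQuot.mkAlgHom ℚ rel a = 0 := by
  rw [RingQuot.mkAlgHom_rel ℚ h, map_zero]

theorem gen_mul_self (i : Fin 9) : gen i * gen i = 0 := by
  rw [gen, ← map_mul, e, ι_sq_zero, map_zero]

theorem gen_mul_gen_swap (i j : Fin 9) : gen i * gen j = -(gen j * gen i) := by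
  rw [eq_neg_iff_add_eq_zero, gen, gen, ← map_mul, ← map_mul, ← map_add, e, e, ι_add_mul_swap,
    map_zero]

theorem binomial_relations :
    gen 1 * gen 2 = -(gen 0 * gen 6) ∧ gen 1 * gen 3 = gen 0 * gen 7 ∧
      gen 2 * gen 3 = -(gen 0 * gen 8) ∧ gen 4 * gen 5 = -(gen 0 * gen 8) ∧
      gen 2 * gen 7 = gen 1 * gen 8 ∧ gen 3 * gen 6 = gen 1 * gen 8 := by
  have h06 : gen 0 * gen 6 + gen 1 * gen 2 = 0 := by
    simpa [gen] using mkAlgHom_eq_zero_of_rel (a := e 0 * e 6 + e 1 * e 2) (by simp [rel])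
  have h07 : gen 0 * gen 7 - gen 1 * gen 3 = 0 := by
    simpa [gen] using mkAlgHom_eq_zero_of_rel (a := e 0 * e 7 - e 1 * e 3) (by simp [rel])
  have h08 : gen 0 * gen 8 + gen 2 * gen 3 = 0 := by
    simpa [gen] using mkAlgHom_eq_zero_of_rel (a := e 0 * e 8 + e 2 * e 3) (by simp [rel])
  have h08' : gen 0 * gen 8 + gen 4 * gen 5 = 0 := by
    simpa [gen] using mkAlgHom_eq_zero_of_rel (a := e 0 * e 8 + e 4 * e 5) (by simp [rel])
  have h18 : gen 1 * gen 8 - gen 2 * gen 7 = 0 := by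
    simpa [gen] using mkAlgHom_eq_zero_of_rel (a := e 1 * e 8 - e 2 * e 7) (by simp [rel])
  have h27 : gen 2 * gen 7 - gen 3 * gen 6 = 0 := by
    simpa [gen] using mkAlgHom_eq_zero_of_rel (a := e 2 * e 7 - e 3 * e 6) (by simp [rel])
  exact ⟨eq_neg_of_add_eq_zero_right h06, (sub_eq_zero.mp h07).symm,
    eq_neg_of_add_eq_zero_right h08, eq_neg_of_add_eq_zero_right h08', (sub_eq_zero.mp h18).symm,
    (sub_eq_zero.mp h27).symm.trans (sub_eq_zero.mp h18).symm⟩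

/-- The pairs `i < j` for which the monomial `e i * e j` is itself one of the relations. -/
def zeroPairs : List (Fin 9 × Fin 9) :=
  [(0, 4), (0, 5), (1, 6), (1, 7), (2, 4), (2, 5), (2, 6), (2, 8), (3, 4), (3, 5), (3, 7), (3, 8),
    (4, 6), (4, 7), (4, 8), (5, 6), (5, 7), (5, 8), (6, 7), (6, 8), (7, 8)]

theorem contract_single_eq_zero : ∀ p ∈ zeroPairs,
    contract trivector (Pi.single p.1 1) (Pi.single p.2 1) = 0 := by
  simp [zeroPairs, contract_trivector, plucker]

theorem gen_mul_gen_eq_zero {i j : Fin 9} (h : (i, j) ∈ zeroPairs) : gen i * gen j = 0 := by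
  have hrel : ∀ p ∈ zeroPairs, rel (e p.1 * e p.2) 0 := by simp [zeroPairs, rel]
  rw [gen, gen, ← map_mul, mkAlgHom_eq_zero_of_rel (hrel _ h)]

/-- The elements of `A` that `ofDual` assigns to the coordinate forms on `ℚ⁹`. The entry at `k` is
`± gen i * gen j` for a pair `i < j` such that `trivector` contracts `e i`, `e j` to `± proj k`. -/
noncomputable def dualGen : Fin 9 → A :=
  ![gen 1 * gen 8, -(gen 0 * gen 8), -(gen 0 * gen 7), -(gen 0 * gen 6), -(gen 1 * gen 5),
    gen 1 * gen 4, gen 0 * gen 3, gen 0 * gen 2, gen 0 * gen 1]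

/-- The identification of the dual of `ℚ⁹` with the degree two part of `A`. -/
noncomputable def ofDual : Module.Dual ℚ (Fin 9 → ℚ) →ₗ[ℚ] A :=
  (Pi.basisFun ℚ (Fin 9)).dualBasis.constr ℚ dualGen

theorem ofDual_proj (k : Fin 9) : ofDual (LinearMap.proj k) = dualGen k := by
  have hk : LinearMap.proj k = (Pi.basisFun ℚ (Fin 9)).dualBasis k :=
    LinearMap.ext fun w => by simp
  rw [hk, ofDual, Module.Basis.constr_basis]

theorem mem_zeroPairs_or_mem_compl : ∀ i j : Fin 9, i < j → (i, j) ∈ zeroPairs ∨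
    (i, j) ∈ [(0, 1), (0, 2), (0, 3), (0, 6), (0, 7), (0, 8), (1, 2), (1, 3), (1, 4), (1, 5),
      (1, 8), (2, 3), (2, 7), (3, 6), (4, 5)] := by
  decide

theorem gen_mul_gen_of_lt {i j : Fin 9} (hij : i < j) :
    gen i * gen j = ofDual (contract trivector (Pi.single i 1) (Pi.single j 1)) := by
  obtain ⟨h12, h13, h23, h45, h27, h36⟩ := binomial_relations
  obtain h | h := mem_zeroPairs_or_mem_compl i j hij
  · rw [gen_mul_gen_eq_zero h, contract_single_eq_zero _ h, map_zero]
  fin_cases h <;>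
    simp [contract_trivector, plucker, ofDual_proj, dualGen, h12, h13, h23, h45, h27, h36]

theorem mkAlgHom_ι_mul_ι (u v : Fin 9 → ℚ) :
    RingQuot.mkAlgHom ℚ rel (ι ℚ u * ι ℚ v) = ofDual (contract trivector u v) := by
  let degreeOne : (Fin 9 → ℚ) →ₗ[ℚ] A := (RingQuot.mkAlgHom ℚ rel).toLinearMap ∘ₗ ι ℚ
  have hmul : ((LinearMap.mul ℚ A).compl₁₂ degreeOne degreeOne).IsAlt := fun u =>
    (map_mul (RingQuot.mkAlgHom ℚ rel) _ _).symm.trans (by rw [ι_sq_zero, map_zero])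
  have hcontract : ((contract trivector).compr₂ ofDual).IsAlt := fun u => by
    rw [LinearMap.compr₂_apply, contract_isAlt trivector u, map_zero]
  have hext := bilin_ext_of_isAlt hmul hcontract (Pi.basisFun ℚ (Fin 9)) fun i j hij => by
    simpa [degreeOne, gen, e] using gen_mul_gen_of_lt hij
  simpa [degreeOne] using congr($hext u v)

-- The last five triples are the terms of `trivector`; on the first three both it and the triple
-- product of generators vanish.
theorem mem_zeroPairs_or_mem_triangles : ∀ i j k : Fin 9, i < j → j < k →
    (i, j) ∈ zeroPairs ∨ (i, k) ∈ zeroPairs ∨ (j, k) ∈ zeroPairs ∨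
      (i, j, k) ∈ [(0, 1, 2), (0, 1, 3), (0, 2, 3), (0, 1, 8), (0, 2, 7), (0, 3, 6), (1, 2, 3),
        (1, 4, 5)] := by
  set_option synthInstance.maxSize 1000 in decide

/-- The product of the generators indexed by the first term of `trivector`, which spans the degree
three part of `A`. -/
noncomputable def vol : A := gen 0 * (gen 1 * gen 8)

theorem gen_mul_gen_mul_gen_of_lt {i j k : Fin 9} (hij : i < j) (hjk : j < k) :
    gen i * (gen j * gen k) =
      trivector ![Pi.single i 1, Pi.single j 1, Pi.single k 1] • vol := by
  rw [← contract_apply]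
  obtain h | h | h | h := mem_zeroPairs_or_mem_triangles i j k hij hjk
  · rw [← mul_assoc, gen_mul_gen_eq_zero h, zero_mul, contract_single_eq_zero _ h,
      LinearMap.zero_apply, zero_smul]
  · rw [gen_mul_gen_swap, mul_neg, ← mul_assoc, gen_mul_gen_eq_zero h, zero_mul, neg_zero,
      ← (contract_apply_isAlt trivector _).neg, contract_single_eq_zero _ h,
      LinearMap.zero_apply, neg_zero, zero_smul]
  · rw [gen_mul_gen_eq_zero h, mul_zero, contract_rotate, contract_single_eq_zero _ h,
      LinearMap.zero_apply, zero_smul]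
  obtain ⟨h12, h13, h23, h45, h27, h36⟩ := binomial_relations
  have hsq (y : A) : gen 0 * (gen 0 * y) = 0 := by
    rw [← mul_assoc, gen_mul_self, zero_mul]
  have hswap (y : A) : gen 1 * (gen 0 * y) = -(gen 0 * (gen 1 * y)) := by
    rw [← mul_assoc, gen_mul_gen_swap, neg_mul, mul_assoc]
  fin_cases h <;>
    simp [vol, contract_trivector, plucker, h12, h13, h23, h45, h27, h36, hsq, hswap]

theorem mkAlgHom_ιMulti (v : Fin 3 → Fin 9 → ℚ) :
    RingQuot.mkAlgHom ℚ rel (ιMulti ℚ 3 v) = trivector v • vol := by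
  have hext : (RingQuot.mkAlgHom ℚ rel).toLinearMap.compAlternatingMap (ιMulti ℚ 3) =
      (LinearMap.toSpanSingleton ℚ A vol).compAlternatingMap trivector := by
    refine alternatingMap_ext_of_strictMono (Pi.basisFun ℚ (Fin 9)) fun t ht => ?_
    have hprod := gen_mul_gen_mul_gen_of_lt (ht (show (0 : Fin 3) < 1 by decide))
      (ht (show (1 : Fin 3) < 2 by decide))
    have ht3 : (fun k => Pi.basisFun ℚ (Fin 9) (t k)) =
        ![Pi.single (t 0) 1, Pi.single (t 1) 1, Pi.single (t 2) 1] := by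
      ext k : 1
      fin_cases k <;> simp
    rw [ht3]
    simpa [ιMulti_apply, gen, e] using hprod
  simpa using congr($hext v)

end Stmt19

/-- The quotient of the exterior algebra on `e₁,…,e₉` over `ℚ` by the ideal generated
by the 27 listed quadratic elements has Hilbert series `1 + 9z + 9z² + z³`. -/
theorem stmt_19 :
    Module.finrank ℚ (Stmt19.piece 0) = 1 ∧
    Module.finrank ℚ (Stmt19.piece 1) = 9 ∧
    Module.finrank ℚ (Stmt19.piece 2) = 9 ∧
    Module.finrank ℚ (Stmt19.piece 3) = 1 ∧
    ∀ n, 4 ≤ n → Module.finrank ℚ (Stmt19.piece n) = 0 := by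
  have hω := Stmt19.contract_trivector_separatingLeft
  have hρ := Stmt19.quotientAct_comp_mkAlgHom
  have : Nontrivial Stmt19.A := Stmt19.quotientAct.toRingHom.domain_nontrivial
  have hdim : Module.finrank ℚ (Fin 9 → ℚ) = 9 := Module.finrank_fin_fun ℚ
  exact ⟨Trivector.finrank_map_exteriorPower_zero,
    (Trivector.finrank_map_exteriorPower_one hρ).trans hdim,
    (Trivector.finrank_map_exteriorPower_two hω hρ Stmt19.mkAlgHom_ι_mul_ι).trans hdim,
    Trivector.finrank_map_exteriorPower_three hω hρ Stmt19.mkAlgHom_ιMulti,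
    fun _ hn => Trivector.finrank_map_exteriorPower_eq_zero hω Stmt19.mkAlgHom_ιMulti hn⟩
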